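/- The subcubes B_0 together with P_{k,K} for 1 ≤ k ≤ L, K ∈ Λ, P ∈ {C,D} are pairwise disjoint and their union is Z = Z_{d_1} × ⋯ × Z_{d_N}. -/

import Mathlib

/-! The layer number `k` of a vector `v` is its smallest coordinatewise distance to the boundary,
plus one; the central box `B₀` collects the vectors of distance at least `L`. In layer `k` a
coordinate is *extreme* if it equals `k - 1` (low) or `d i - k` (high), and *middle* otherwise.
Lying in `P_{k,K}` means that every extreme coordinate agrees with the side of the subcube there,
and every middle coordinate belongs to `K` (`mem_gcube_iff`).

The key point is that a subcube is the same thing as an arbitrary *cyclic* sequence of sides: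
since `K` is even, the sides flip exactly at the elements of `K` also when passing from the last
coordinate to the first (`cyc_step`), so `K` and the starting side can be read off from the
sequence. A vector of layer `k` prescribes the side at each extreme coordinate and a flip at each
middle one. Hence as soon as there is one extreme coordinate, walking around the cycle from there
determines the sides (`gcube_unique`) and also constructs them (`exists_gcube`).
A vector with middle coordinates only would need `K` to be everything, which is
impossible because `N` is odd (`exists_extreme`); this separates different layers and `B₀`. -/

open scoped BigOperators Matrix

namespace SNL

/-- `side N K b i` is `false` if the `i`-th component (0-based) of the subcube `P_K`
(`b = false` for `C`, `b = true` for `D`) is of "low" type (`{0}` or `{0,1}`),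
and `true` if it is of "high" type (`{2}` or `{1,2}`), following the recursive
definition: the first component is low for `C` and high for `D`, and the type flips
from component `i` to `i+1` exactly when coordinate `i+1` belongs to `K`. -/
def side (N : ℕ) (K : Finset (Fin N)) (b : Bool) : ℕ → Bool
  | 0 => b
  | i + 1 => Bool.xor (side N K b i) (decide ((i + 1) ∈ K.image Fin.val))

/-- Lower endpoint of the `i`-th component of the subcube `P_{k,K}` of
`Z_{d₁} × ⋯ × Z_{d_N}`, obtained from `P_K` by the coordinatewise replacements
`{0} ↦ {k-1}`, `{2} ↦ {d_i - k}`, `{0,1} ↦ {k-1, …, d_i-k-1}`,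
`{1,2} ↦ {k, …, d_i-k}`. -/
def glo (N : ℕ) (d : Fin N → ℕ) (k : ℕ) (K : Finset (Fin N)) (b : Bool)
    (i : Fin N) : ℕ :=
  if i ∈ K then (if side N K b i.val then k else k - 1)
  else (if side N K b i.val then d i - k else k - 1)

/-- Upper endpoint of the `i`-th component of the subcube `P_{k,K}`. -/
def ghi (N : ℕ) (d : Fin N → ℕ) (k : ℕ) (K : Finset (Fin N)) (b : Bool)
    (i : Fin N) : ℕ :=
  if i ∈ K then (if side N K b i.val then d i - k else d i - k - 1)
  else (if side N K b i.val then d i - k else k - 1)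

/-- The `i`-th component of the subcube `P_{k,K}`, an interval of integers. -/
def gcomp (N : ℕ) (d : Fin N → ℕ) (k : ℕ) (K : Finset (Fin N)) (b : Bool)
    (i : Fin N) : Finset ℕ :=
  Finset.Icc (glo N d k K b i) (ghi N d k K b i)

/-- The subcube `P_{k,K}` of `Z = Z_{d₁} × ⋯ × Z_{d_N}` as a set of vectors. -/
def gcube (N : ℕ) (d : Fin N → ℕ) (k : ℕ) (K : Finset (Fin N)) (b : Bool) :
    Set ((i : Fin N) → Fin (d i)) :=
  {v | ∀ i, (v i : ℕ) ∈ gcomp N d k K b i}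

/-- The central subcube `B₀ = ∏ᵢ {L, L+1, …, d_i - L - 1}`. -/
def gB0 (N : ℕ) (d : Fin N → ℕ) (L : ℕ) : Set ((i : Fin N) → Fin (d i)) :=
  {v | ∀ i, (v i : ℕ) ∈ Finset.Icc L (d i - L - 1)}

/-- The `k`-th layer `L_k = ∏ᵢ {k-1, …, d_i-k} ∖ ∏ᵢ {k, …, d_i-k-1}`. -/
def layer (N : ℕ) (d : Fin N → ℕ) (k : ℕ) : Set ((i : Fin N) → Fin (d i)) :=
  {v | ∀ i, (v i : ℕ) ∈ Finset.Icc (k - 1) (d i - k)} \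
    {v | ∀ i, (v i : ℕ) ∈ Finset.Icc k (d i - k - 1)}

/-- The Fourier vector `F_A^n` attached to the interval `A = {a, …, b}` of size
`r = b - a + 1`: it is `exp(2π√-1·(m-a)·n/r)` on `A` and `0` elsewhere. -/
noncomputable def fourier (a b n : ℕ) (m : ℕ) : ℂ :=
  if m ∈ Finset.Icc a b then
    Complex.exp (2 * Real.pi * Complex.I * (((m : ℂ) - (a : ℂ)) * (n : ℂ)) /
      ((b : ℂ) - (a : ℂ) + 1))
  else 0

/-- The product state attached to the subcube `P_{k,K}` with Fourier indices `n`. -/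
noncomputable def gAtt (N : ℕ) (d : Fin N → ℕ) (k : ℕ) (K : Finset (Fin N))
    (b : Bool) (n : Fin N → ℕ) : ((i : Fin N) → Fin (d i)) → ℂ :=
  fun v => ∏ i, fourier (glo N d k K b i) (ghi N d k K b i) (n i) (v i)

/-- The product state attached to the central subcube `B₀` with Fourier indices `n`. -/
noncomputable def gAttB0 (N : ℕ) (d : Fin N → ℕ) (L : ℕ) (n : Fin N → ℕ) :
    ((i : Fin N) → Fin (d i)) → ℂ :=
  fun v => ∏ i, fourier L (d i - L - 1) (n i) (v i)

/-- The inner product on `H_d = (Z → ℂ)`. -/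
noncomputable def ginner (N : ℕ) (d : Fin N → ℕ)
    (ψ φ : ((i : Fin N) → Fin (d i)) → ℂ) : ℂ :=
  ∑ v, (starRingEnd ℂ) (ψ v) * φ v

/-- A product vector in `H_d`. -/
def gIsProdVec (N : ℕ) (d : Fin N → ℕ) (ψ : ((i : Fin N) → Fin (d i)) → ℂ) : Prop :=
  ∃ f : (i : Fin N) → Fin (d i) → ℂ, ∀ v, ψ v = ∏ i, f i (v i)

/-- The stopper state `|S⟩`, the constant function `1`. -/
def gS (N : ℕ) (d : Fin N → ℕ) : ((i : Fin N) → Fin (d i)) → ℂ := fun _ => 1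

/-- The full collection of product states attached to the subcubes
`B₀` and `P_{k,K}` (`1 ≤ k ≤ L`, `K` even, `P ∈ {C, D}`). -/
noncomputable def gBasisSet (N : ℕ) (d : Fin N → ℕ) (L : ℕ) :
    Set (((i : Fin N) → Fin (d i)) → ℂ) :=
  {ψ | ∃ n : Fin N → ℕ, (∀ i, n i < d i - 2 * L) ∧ ψ = gAttB0 N d L n} ∪
    {ψ | ∃ k K b n, 1 ≤ k ∧ k ≤ L ∧ Even (Finset.card K) ∧
      (∀ i, n i < ghi N d k K b i - glo N d k K b i + 1) ∧ ψ = gAtt N d k K b n}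

/-- The orthogonal product set `O_d` of all product states attached to the
first-layer subcubes `P_{1,K}`. -/
noncomputable def setOd (N : ℕ) (d : Fin N → ℕ) :
    Set (((i : Fin N) → Fin (d i)) → ℂ) :=
  {ψ | ∃ K b n, Even (Finset.card K) ∧
    (∀ i, n i < ghi N d 1 K b i - glo N d 1 K b i + 1) ∧ ψ = gAtt N d 1 K b n}

/-- The unextendible product basis `U_d`: the stopper `|S⟩` together with, for every
subcube `Q` in the decomposition, all its attached states other than `|Q⁺⟩`
(the one with all Fourier indices `0`). -/
noncomputable def setUd (N : ℕ) (d : Fin N → ℕ) (L : ℕ) :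
    Set (((i : Fin N) → Fin (d i)) → ℂ) :=
  {gS N d} ∪
    {ψ | ∃ n : Fin N → ℕ, (∀ i, n i < d i - 2 * L) ∧ (∃ i, n i ≠ 0) ∧
      ψ = gAttB0 N d L n} ∪
    {ψ | ∃ k K b n, 1 ≤ k ∧ k ≤ L ∧ Even (Finset.card K) ∧
      (∀ i, n i < ghi N d k K b i - glo N d k K b i + 1) ∧ (∃ i, n i ≠ 0) ∧
      ψ = gAtt N d k K b n}

/-- Restriction of a vector to the coordinates other than `m`. -/
def gres (N : ℕ) (d : Fin N → ℕ) (m : Fin N) (v : (i : Fin N) → Fin (d i)) :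
    (j : {i : Fin N // i ≠ m}) → Fin (d j.1) :=
  fun j => v j.1

/-- The operator `I_m ⊗ E` on `H_d`, where `E` is a matrix acting on the joint
party of all subsystems except `m`. -/
noncomputable def gopIE (N : ℕ) (d : Fin N → ℕ) (m : Fin N)
    (E : Matrix ((j : {i : Fin N // i ≠ m}) → Fin (d j.1))
      ((j : {i : Fin N // i ≠ m}) → Fin (d j.1)) ℂ)
    (ψ : ((i : Fin N) → Fin (d i)) → ℂ) : ((i : Fin N) → Fin (d i)) → ℂ :=
  fun v => ∑ v' : (i : Fin N) → Fin (d i),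
    if v' m = v m then E (gres N d m v) (gres N d m v') * ψ v' else 0

end SNL

namespace SNL


/-! ### The cyclic sequence of sides -/

lemma side_succ (N : ℕ) (K : Finset (Fin N)) (b : Bool) (n : ℕ) (hn : n + 1 < N) :
    side N K b (n + 1) = Bool.xor (side N K b n) (decide ((⟨n + 1, hn⟩ : Fin N) ∈ K)) := by
  have himg : (n + 1 ∈ K.image Fin.val) ↔ (⟨n + 1, hn⟩ : Fin N) ∈ K := by
    simp only [Finset.mem_image]
    constructor
    · rintro ⟨i, hi, h⟩
      have : i = ⟨n + 1, hn⟩ := Fin.ext h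
      exact this ▸ hi
    · intro h; exact ⟨_, h, rfl⟩
  rw [side]
  congr 1
  exact decide_eq_decide.mpr himg

/-- The sides up to `n` flip once for each element of `K` up to `n`, when the walk starts from the
virtual side `b xor [0 ∈ K]` preceding coordinate `0`. -/
lemma side_eq (N : ℕ) (hN : 0 < N) (K : Finset (Fin N)) (b : Bool) (n : ℕ) (hn : n < N) :
    side N K b n = Bool.xor (Bool.xor b (decide ((⟨0, hN⟩ : Fin N) ∈ K)))
      (decide (Odd (K.filter (fun i => i.val ≤ n)).card)) := by
  induction n with
  | zero =>
    by_cases h : (⟨0, hN⟩ : Fin N) ∈ K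
    · have : K.filter (fun i => i.val ≤ 0) = {⟨0, hN⟩} := by
        ext i
        simp only [Finset.mem_filter, Finset.mem_singleton, Fin.ext_iff]
        constructor
        · rintro ⟨_, h⟩; omega
        · intro hi
          have : i = ⟨0, hN⟩ := Fin.ext hi
          subst this
          exact ⟨h, le_rfl⟩
      rw [this]
      simp [side, h]
    · have : K.filter (fun i => i.val ≤ 0) = ∅ := by
        ext i
        simp only [Finset.mem_filter, Finset.notMem_empty, iff_false]
        rintro ⟨hi, h0⟩
        have : i = ⟨0, hN⟩ := Fin.ext (by simpa using h0)
        exact h (this ▸ hi)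
      rw [this]
      simp [side, h]
  | succ n ih =>
    rw [side_succ N K b n hn, ih (by omega)]
    by_cases h : (⟨n + 1, hn⟩ : Fin N) ∈ K
    · have : K.filter (fun i => i.val ≤ n + 1)
          = insert ⟨n + 1, hn⟩ (K.filter (fun i => i.val ≤ n)) := by
        ext i
        simp only [Finset.mem_filter, Finset.mem_insert, Fin.ext_iff]
        constructor
        · rintro ⟨hi, hle⟩
          by_cases h' : i.val = n + 1
          · exact Or.inl h'
          · exact Or.inr ⟨hi, by omega⟩
        · rintro (hi | ⟨hi, hle⟩)
          · have : i = ⟨n + 1, hn⟩ := Fin.ext hi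
            subst this
            exact ⟨h, le_rfl⟩
          · exact ⟨hi, by omega⟩
      rw [this, Finset.card_insert_of_notMem (by simp)]
      by_cases ho : Odd (K.filter (fun i => i.val ≤ n)).card
      · simp [h, ho, Nat.odd_add_one]
      · simp only [h, ho, Nat.odd_add_one]
        simp
    · have : K.filter (fun i => i.val ≤ n + 1) = K.filter (fun i => i.val ≤ n) := by
        ext i
        simp only [Finset.mem_filter, and_congr_right_iff]
        intro hi
        have : i.val ≠ n + 1 := fun e => h ((Fin.ext e : i = ⟨n + 1, hn⟩) ▸ hi)
        omega
      simp [this, h]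

lemma side_last (N : ℕ) (hN : 0 < N) (K : Finset (Fin N)) (b : Bool) :
    side N K b (N - 1) = Bool.xor (Bool.xor b (decide ((⟨0, hN⟩ : Fin N) ∈ K)))
      (decide (Odd K.card)) := by
  rw [side_eq N hN K b (N - 1) (by omega), Finset.filter_true_of_mem]
  intro i _
  have := i.2
  omega

/-- The cyclic coordinate `n mod N`. -/
def idx (N : ℕ) (hN : 0 < N) (n : ℕ) : Fin N := ⟨n % N, Nat.mod_lt _ hN⟩

lemma idx_val (N : ℕ) (hN : 0 < N) (i : Fin N) : idx N hN i.val = i :=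
  Fin.ext (Nat.mod_eq_of_lt i.2)

lemma idx_add (N : ℕ) (hN : 0 < N) (n : ℕ) : idx N hN (n + N) = idx N hN n :=
  Fin.ext (Nat.add_mod_right n N)

/-- For even `K` the rule "flip exactly on `K`" also holds across the wrap-around from coordinate
`N - 1` to coordinate `0`. -/
lemma cyc_step (N : ℕ) (hN : 0 < N) (K : Finset (Fin N)) (b : Bool) (hK : Even K.card) (n : ℕ) :
    side N K b (idx N hN (n + 1)) =
      Bool.xor (side N K b (idx N hN n)) (decide (idx N hN (n + 1) ∈ K)) := by
  by_cases h : n % N + 1 < N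
  · have e : idx N hN (n + 1) = ⟨n % N + 1, h⟩ := by
      apply Fin.ext
      change (n + 1) % N = n % N + 1
      rw [← Nat.mod_add_mod, Nat.mod_eq_of_lt h]
    rw [e]
    exact side_succ N K b _ h
  · have hlt := Nat.mod_lt n hN
    have e1 : n % N = N - 1 := by omega
    have e : idx N hN (n + 1) = ⟨0, hN⟩ := by
      apply Fin.ext
      change (n + 1) % N = 0
      rw [← Nat.mod_add_mod, e1, Nat.sub_add_cancel hN, Nat.mod_self]
    have hno : ¬ Odd K.card := by simpa using hK
    rw [e]
    change side N K b 0 = Bool.xor (side N K b (n % N)) _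
    rw [e1, side_last N hN]
    simp [hno, side]

/-! ### Membership in a subcube -/

/-- In layer `k`, a vector lies in `P_{k,K}` iff its low and high coordinates agree with the
sides, and its middle coordinates lie in `K`. -/
lemma mem_gcube_iff (N : ℕ) (d : Fin N → ℕ) (L : ℕ) (hd : ∀ i, 2 * L + 1 ≤ d i)
    (k : ℕ) (h1 : 1 ≤ k) (hk : k ≤ L) (K : Finset (Fin N)) (b : Bool)
    (v : (i : Fin N) → Fin (d i)) :
    v ∈ gcube N d k K b ↔ ∀ i, (k ≤ (v i : ℕ) + 1 ∧ (v i : ℕ) + k ≤ d i) ∧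
      ((v i : ℕ) + 1 = k → side N K b i = false) ∧
      ((v i : ℕ) + k = d i → side N K b i = true) ∧
      (k ≤ (v i : ℕ) → (v i : ℕ) + k < d i → i ∈ K) := by
  unfold gcube gcomp glo ghi
  simp only [Set.mem_ofPred_eq, Finset.mem_Icc]
  apply forall_congr'
  intro i
  have := hd i
  by_cases hi : i ∈ K <;> cases hs : side N K b i <;> simp [hi] <;> omega

/-- Every vector of a subcube has an extreme coordinate: otherwise `K` would contain all of the
oddly many coordinates. -/
lemma exists_extreme (N : ℕ) (hodd : Odd N) (d : Fin N → ℕ) (L : ℕ)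
    (hd : ∀ i, 2 * L + 1 ≤ d i)
    (k : ℕ) (h1 : 1 ≤ k) (hk : k ≤ L) (K : Finset (Fin N)) (b : Bool) (hK : Even K.card)
    (v : (i : Fin N) → Fin (d i)) (hv : v ∈ gcube N d k K b) :
    ∃ i, (v i : ℕ) + 1 = k ∨ (v i : ℕ) + k = d i := by
  rw [mem_gcube_iff N d L hd k h1 hk] at hv
  by_contra! h
  have : K = Finset.univ := by
    rw [Finset.eq_univ_iff_forall]
    intro i
    have h2 := h i
    have h3 := hv i
    exact h3.2.2.2 (by omega) (by omega)
  rw [this, Finset.card_univ, Fintype.card_fin] at hK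
  exact (Nat.not_even_iff_odd.mpr hodd) hK

lemma gcube_unique (N : ℕ) (hodd : Odd N) (d : Fin N → ℕ) (L : ℕ)
    (hd : ∀ i, 2 * L + 1 ≤ d i)
    (k : ℕ) (h1 : 1 ≤ k) (hk : k ≤ L) (K K' : Finset (Fin N)) (b b' : Bool)
    (hK : Even K.card) (hK' : Even K'.card)
    (v : (i : Fin N) → Fin (d i)) (hv : v ∈ gcube N d k K b) (hv' : v ∈ gcube N d k K' b') :
    K = K' ∧ b = b' := by
  have hN : 0 < N := hodd.pos
  obtain ⟨i0, hi0⟩ := exists_extreme N hodd d L hd k h1 hk K b hK v hv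
  rw [mem_gcube_iff N d L hd k h1 hk] at hv hv'
  have hext : ∀ i, (v i : ℕ) + 1 = k ∨ (v i : ℕ) + k = d i →
      side N K b i = side N K' b' i := by
    rintro i (h | h)
    · rw [(hv i).2.1 h, (hv' i).2.1 h]
    · rw [(hv i).2.2.1 h, (hv' i).2.2.1 h]
  have hwalk : ∀ m, side N K b (idx N hN (i0.val + m)) = side N K' b' (idx N hN (i0.val + m)) := by
    intro m
    induction m with
    | zero => rw [Nat.add_zero, idx_val]; exact hext i0 hi0
    | succ m ih =>
      set j := idx N hN (i0.val + (m + 1)) with hj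
      by_cases he : (v j : ℕ) + 1 = k ∨ (v j : ℕ) + k = d j
      · exact hext j he
      · have a := hv j
        have a' := hv' j
        have m1 : j ∈ K := a.2.2.2 (by omega) (by omega)
        have m2 : j ∈ K' := a'.2.2.2 (by omega) (by omega)
        have e1 := cyc_step N hN K b hK (i0.val + m)
        have e2 := cyc_step N hN K' b' hK' (i0.val + m)
        rw [add_assoc, ← hj] at e1 e2
        rw [e1, e2, ih]
        simp [m1, m2]
  have hall : ∀ n, side N K b (idx N hN n) = side N K' b' (idx N hN n) := by
    intro n
    -- `i0 < N`, so one full turn later the coordinate is reached from `i0`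
    have h := hwalk (n + N - i0.val)
    have := i0.2
    rw [show i0.val + (n + N - i0.val) = n + N by omega, idx_add] at h
    exact h
  constructor
  · ext i
    have e1 := cyc_step N hN K b hK (i.val + N - 1)
    have e2 := cyc_step N hN K' b' hK' (i.val + N - 1)
    rw [hall, hall, show i.val + N - 1 + 1 = i.val + N by omega, idx_add, idx_val] at e1
    rw [show i.val + N - 1 + 1 = i.val + N by omega, idx_add, idx_val] at e2
    rw [e1] at e2
    simpa using e2
  · have := hall 0
    simpa [idx, side] using this

/-! ### Constructing the subcube of a vector -/

/-- The sides forced by a vector of layer `k`, walking around the cycle: the side is read off at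
extreme coordinates and flips at middle ones. The value at `0` is arbitrary; it is overridden as
soon as an extreme coordinate has been passed. -/
def walk (N : ℕ) (hN : 0 < N) (d : Fin N → ℕ) (v : (i : Fin N) → Fin (d i)) (k : ℕ) : ℕ → Bool
  | 0 => false
  | n + 1 =>
    if (v (idx N hN (n + 1)) : ℕ) + 1 = k then false
    else if (v (idx N hN (n + 1)) : ℕ) + k = d (idx N hN (n + 1)) then true
    else !(walk N hN d v k n)

lemma walk_periodic (N : ℕ) (hN : 0 < N) (d : Fin N → ℕ) (v : (i : Fin N) → Fin (d i)) (k : ℕ)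
    (i0 : Fin N) (hi0 : (v i0 : ℕ) + 1 = k ∨ (v i0 : ℕ) + k = d i0) (m : ℕ) :
    walk N hN d v k (i0.val + N + m + N) = walk N hN d v k (i0.val + N + m) := by
  induction m with
  | zero =>
    have e1 : idx N hN (i0.val + N - 1 + 1) = i0 := by
      rw [show i0.val + N - 1 + 1 = i0.val + N by omega, idx_add, idx_val]
    have e2 : idx N hN (i0.val + N + N - 1 + 1) = i0 := by
      rw [show i0.val + N + N - 1 + 1 = i0.val + N + N by omega, idx_add, idx_add, idx_val]
    rw [Nat.add_zero, show i0.val + N + N = (i0.val + N + N - 1) + 1 by omega,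
      show i0.val + N = (i0.val + N - 1) + 1 by omega, walk, walk, e1,
      show i0.val + N - 1 + 1 + N - 1 + 1 = i0.val + N + N - 1 + 1 by omega, e2]
    rcases hi0 with h | h <;> simp [h]
  | succ m ih =>
    rw [show i0.val + N + (m + 1) + N = (i0.val + N + m + N) + 1 by omega,
      show i0.val + N + (m + 1) = (i0.val + N + m) + 1 by omega, walk, walk, ih,
      show (i0.val + N + m + N) + 1 = (i0.val + N + m + 1) + N by omega, idx_add]

/-- A vector of layer `k` with an extreme coordinate lies in some subcube of that layer. -/
lemma exists_gcube (N : ℕ) (hN : 0 < N) (d : Fin N → ℕ) (L : ℕ)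
    (hd : ∀ i, 2 * L + 1 ≤ d i)
    (k : ℕ) (h1 : 1 ≤ k) (hk : k ≤ L)
    (v : (i : Fin N) → Fin (d i)) (hlay : ∀ i, k ≤ (v i : ℕ) + 1 ∧ (v i : ℕ) + k ≤ d i)
    (i0 : Fin N) (hi0 : (v i0 : ℕ) + 1 = k ∨ (v i0 : ℕ) + k = d i0) :
    ∃ K b, Even (Finset.card K) ∧ v ∈ gcube N d k K b := by
  -- the second turn of the walk is used, since by then the extreme coordinate has been passed
  let g : ℕ → Bool := fun n => walk N hN d v k (n + 2 * N)
  have hg : ∀ n, g (n + N) = g n := by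
    intro n
    have := walk_periodic N hN d v k i0 hi0 (n + N - i0.val)
    have hi := i0.2
    rw [show i0.val + N + (n + N - i0.val) = n + 2 * N by omega] at this
    change walk N hN d v k (n + N + 2 * N) = walk N hN d v k (n + 2 * N)
    rw [← this]
    congr 1
    omega
  have hstep : ∀ n, g (n + 1) = if (v (idx N hN (n + 1)) : ℕ) + 1 = k then false
      else if (v (idx N hN (n + 1)) : ℕ) + k = d (idx N hN (n + 1)) then true
      else !(g n) := by
    intro n
    change walk N hN d v k (n + 1 + 2 * N) = _
    rw [show n + 1 + 2 * N = (n + 2 * N) + 1 by omega, walk,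
      show n + 2 * N + 1 = (n + 1) + N + N by omega, idx_add, idx_add]
  let K : Finset (Fin N) := Finset.univ.filter (fun i => g (i.val + N) ≠ g (i.val + N - 1))
  have hKmem : ∀ i, i ∈ K ↔ g (i.val + N) ≠ g (i.val + N - 1) := by
    intro i; simp [K]
  have hside : ∀ n, n < N → side N K (g 0) n = g n := by
    intro n
    induction n with
    | zero => intro _; rfl
    | succ n ih =>
      intro hn
      rw [side_succ N K _ n hn, ih (by omega)]
      have := hKmem ⟨n + 1, hn⟩
      simp only [show n + 1 + N - 1 = n + N by omega, hg] at this
      cases h : g n <;> cases h' : g (n + 1) <;> simp [this, h, h']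
  refine ⟨K, g 0, ?_, ?_⟩
  · have hl := side_last N hN K (g 0)
    have := hKmem ⟨0, hN⟩
    simp only [Nat.zero_add] at this
    rw [show g N = g 0 by simpa using hg 0] at this
    rw [hside (N - 1) (by omega)] at hl
    rw [← Nat.not_odd_iff_even]
    intro ho
    cases h : g 0 <;> cases h' : g (N - 1) <;> simp [this, ho, h, h'] at hl
  · rw [mem_gcube_iff N d L hd k h1 hk]
    intro i
    have hs := hstep (i.val + N - 1)
    have hi := hd i
    rw [show i.val + N - 1 + 1 = i.val + N by omega, idx_add, idx_val] at hs
    rw [hside i.val i.2, hKmem i]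
    rw [← hg i.val]
    refine ⟨hlay i, ?_, ?_, ?_⟩
    · intro h; rw [hs, if_pos h]
    · intro h; rw [hs, if_neg (by omega), if_pos h]
    · intro h h'
      rw [hs, if_neg (by omega), if_neg (by omega)]
      simp


/-- The subcubes `B₀` together with `P_{k,K}` (`1 ≤ k ≤ L`, `K` even,
`P ∈ {C, D}`) are pairwise disjoint and their union is
`Z = Z_{d₁} × ⋯ × Z_{d_N}`. -/
theorem general_decomposition (N : ℕ) (hodd : Odd N) (hN : 3 ≤ N)
    (d : Fin N → ℕ) (hd : ∀ i, 3 ≤ d i) (hmono : Monotone d)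
    (L : ℕ) (hL : L = (d ⟨0, by omega⟩ - 1) / 2) :
    (∀ k : ℕ, ∀ K : Finset (Fin N), ∀ b : Bool,
        1 ≤ k → k ≤ L → Even K.card →
        Disjoint (gB0 N d L) (gcube N d k K b)) ∧
    (∀ k k' : ℕ, ∀ K K' : Finset (Fin N), ∀ b b' : Bool,
        1 ≤ k → k ≤ L → 1 ≤ k' → k' ≤ L → Even K.card → Even K'.card →
        (k, K, b) ≠ (k', K', b') →
        Disjoint (gcube N d k K b) (gcube N d k' K' b')) ∧
    (gB0 N d L ∪ {v | ∃ k K b, 1 ≤ k ∧ k ≤ L ∧ Even (Finset.card K) ∧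
        v ∈ gcube N d k K b} = Set.univ) := by
  have hd' : ∀ i, 2 * L + 1 ≤ d i := by
    intro i
    have h0 : d ⟨0, by omega⟩ ≤ d i := hmono (Fin.le_def.mpr (Nat.zero_le _))
    have := hd ⟨0, by omega⟩
    omega
  refine ⟨?_, ?_, ?_⟩
  · intro k K b h1 hk hK
    rw [Set.disjoint_left]
    intro v hB hv
    obtain ⟨i, hi⟩ := exists_extreme N hodd d L hd' k h1 hk K b hK v hv
    have h2 := Finset.mem_Icc.mp (hB i)
    have := hd' i
    omega
  · intro k k' K K' b b' h1 hk h1' hk' hK hK' hne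
    rw [Set.disjoint_left]
    intro v hv hv'
    have hkk : k = k' := by
      obtain ⟨i, hi⟩ := exists_extreme N hodd d L hd' k h1 hk K b hK v hv
      obtain ⟨j, hj⟩ := exists_extreme N hodd d L hd' k' h1' hk' K' b' hK' v hv'
      have a := ((mem_gcube_iff N d L hd' k h1 hk K b v).mp hv j).1
      have a' := ((mem_gcube_iff N d L hd' k' h1' hk' K' b' v).mp hv' i).1
      omega
    subst hkk
    obtain ⟨rfl, rfl⟩ := gcube_unique N hodd d L hd' k h1 hk K K' b b' hK hK' v hv hv'
    exact hne rfl
  · rw [Set.eq_univ_iff_forall]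
    intro v
    by_cases hB : v ∈ gB0 N d L
    · exact Or.inl hB
    · right
      have hN0 : 0 < N := hodd.pos
      have : Nonempty (Fin N) := ⟨⟨0, hN0⟩⟩
      -- `i0` realizes the smallest distance to the boundary
      obtain ⟨i0, hi0⟩ := Finite.exists_min (fun i => min (v i : ℕ) (d i - 1 - v i))
      obtain ⟨j, hj⟩ : ∃ j, ¬ ((v j : ℕ) ∈ Finset.Icc L (d j - L - 1)) := by
        by_contra! h
        exact hB h
      rw [Finset.mem_Icc] at hj
      have hj0 := hi0 j
      have hvj := (v j).2
      have hv0 := (v i0).2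
      have hk : min (v i0 : ℕ) (d i0 - 1 - v i0) + 1 ≤ L := by
        omega
      obtain ⟨K, b, hK, hm⟩ := exists_gcube N hN0 d L hd'
        (min (v i0 : ℕ) (d i0 - 1 - v i0) + 1) (by omega) hk v
        (by
          intro i
          have h := hi0 i
          have hv := (v i).2
          omega)
        i0 (by omega)
      exact ⟨_, K, b, by omega, hk, hK, hm⟩

end SNL
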